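/- Let U be a consistent, effectively ef-essentially incomplete c.e. theory. Then there is a c.e. set 𝒳 of sentences such that U is effectively ef-essentially 𝒳-incomplete but U is not effectively if-essentially 𝒳-incomplete. -/

import Mathlib

open FirstOrder FirstOrder.Language

namespace PourEl

/-! ## Recursion-theoretic notions -/

/-- The `i`-th computably enumerable subset of `ℕ` (the domain of the `i`-th
partial computable function). -/
def WSet (i : ℕ) : Set ℕ :=
  {n | ((Denumerable.ofNat Nat.Partrec.Code i).eval n).Dom}

/-- A set of natural numbers is computably enumerable. -/
def CE (A : Set ℕ) : Prop := ∃ i, A = WSet i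

/-- A set of natural numbers is computable. -/
def Comp (A : Set ℕ) : Prop := ComputablePred (· ∈ A)

/-- Disjoint sets `X`, `Y` are computably separable iff some computable set
contains `X` and is disjoint from `Y`. -/
def CompSeparable (X Y : Set ℕ) : Prop :=
  ∃ Z : Set ℕ, Comp Z ∧ X ⊆ Z ∧ Y ∩ Z = ∅

/-- Computable inseparability. -/
def CompInseparable (X Y : Set ℕ) : Prop := ¬ CompSeparable X Y

/-- `Z` and `W` weakly biseparate `X` and `Y`. -/
def WeaklyBiseparate {α : Type*} (Z W X Y : Set α) : Prop :=
  X ⊆ Z ∧ Y ⊆ W ∧ Z ∩ Y = ∅ ∧ W ∩ X = ∅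

/-- `Z` and `W` biseparate `X` and `Y`. -/
def Biseparate {α : Type*} (Z W X Y : Set α) : Prop :=
  WeaklyBiseparate Z W X Y ∧ Z ∩ W = ∅

/-! ## Logical notions -/

variable {L : FirstOrder.Language}

/-- Provability: `φ` is a first-order consequence of `U` (by Gödel completeness,
semantic consequence). -/
def Prv (U : L.Theory) (φ : L.Sentence) : Prop := U ⊨ᵇ φ

/-- `U_p`: the set of theorems of `U`. -/
def Thms (U : L.Theory) : Set L.Sentence := {φ | Prv U φ}

/-- `U_r`: the set of refutable sentences of `U`. -/
def Refut (U : L.Theory) : Set L.Sentence := {φ | Prv U ∼φ}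

/-- Consistency: `U ⊬ ⊥`. -/
def Consistent (U : L.Theory) : Prop := ¬ Prv U ⊥

/-- `φ` is independent of `U`: `U` proves neither `φ` nor `¬φ`. -/
def Independent (U : L.Theory) (φ : L.Sentence) : Prop := ¬ Prv U φ ∧ ¬ Prv U ∼φ

/-- `U` is incomplete: some sentence is independent of it. -/
def Incomplete (U : L.Theory) : Prop := ∃ φ, Independent U φ

/-- Mono-consequence: `U ⊢_m φ` iff `ψ ⊢ φ` for some `ψ ∈ U`. -/
def MPrv (U : L.Theory) (φ : L.Sentence) : Prop := ∃ ψ ∈ U, Prv {ψ} φ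

/-- `U_m`: the set of mono-theorems of `U`. -/
def MThms (U : L.Theory) : Set L.Sentence := {φ | MPrv U φ}

/-- `U_n`: the set of mono-refutable sentences of `U`. -/
def MRefut (U : L.Theory) : Set L.Sentence := {φ | MPrv U ∼φ}

/-- Mono-consistency: every member is consistent by itself. -/
def MonoConsistent (U : L.Theory) : Prop := ∀ ψ ∈ U, Consistent ({ψ} : L.Theory)

/-- `Û`: the set of all non-empty finite conjunctions of elements of `U`. -/
def hat (U : L.Theory) : L.Theory :=
  {φ | ∃ (ψ : L.Sentence) (l : List L.Sentence),
    ψ ∈ U ∧ (∀ χ ∈ l, χ ∈ U) ∧ φ = l.foldl (· ⊓ ·) ψ}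

/-- `U ⋓ V`. -/
def Cup (U V : L.Theory) : L.Theory :=
  {χ | ∃ φ ∈ U, ∃ ψ ∈ V, χ = φ ⊓ ψ}

/-- `U ⋐ V`: for every `φ ∈ U` and `ψ ∈ V` there is `ρ ∈ V` with `ρ ⊢ φ ∧ ψ`. -/
def Ssub (U V : L.Theory) : Prop :=
  ∀ φ ∈ U, ∀ ψ ∈ V, ∃ ρ ∈ V, Prv {ρ} (φ ⊓ ψ)

/-! ## Gödel numbering -/

/-- A Gödel numbering of the sentences of a (countable) signature: a bijective
coding of sentences by natural numbers that is effective for the basic syntactic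
operations, and for which the theorems of a c.e. theory can be effectively
enumerated from an index of the theory. -/
structure Numbering (L : FirstOrder.Language) where
  equiv : L.Sentence ≃ ℕ
  neg_comp : Computable fun n => equiv ∼(equiv.symm n)
  inf_comp : Computable₂ fun m n => equiv (equiv.symm m ⊓ equiv.symm n)
  imp_comp : Computable₂ fun m n => equiv (equiv.symm m ⟹ equiv.symm n)
  iff_comp : Computable₂ fun m n => equiv (equiv.symm m ⇔ equiv.symm n)
  thmIdx : ℕ → ℕ
  thmIdx_comp : Computable thmIdx
  thmIdx_spec : ∀ i, WSet (thmIdx i) = equiv '' Thms (equiv.symm '' WSet i)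

namespace Numbering

variable (g : Numbering L)

/-- The code of a sentence. -/
def code (φ : L.Sentence) : ℕ := g.equiv φ

/-- The set of codes of a set of sentences. -/
def codes (S : Set L.Sentence) : Set ℕ := g.equiv '' S

/-- The theory axiomatised by the `i`-th c.e. set (identified with a set of
sentences via the numbering). -/
def thy (i : ℕ) : L.Theory := g.equiv.symm '' WSet i

/-- The theory `U` is computably enumerable (with respect to the numbering). -/
def CEThy (U : L.Theory) : Prop := CE (g.codes U)

end Numbering


/-- `Φ` witnesses that `U` is effectively if-essentially `F`-incomplete: whenever
`W i` is a consistent finite extension of `U` (as a set of axioms), `Φ i`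
converges to (the code of) a sentence in `F (W i)` independent of `W i`. -/
def IfEssWitness (g : Numbering L) (U : L.Theory)
    (F : Set L.Sentence → Set L.Sentence) (Φ : ℕ →. ℕ) : Prop :=
  ∀ i, (∃ Γ : Finset L.Sentence, g.thy i = U ∪ (Γ : Set L.Sentence)) →
    Consistent (g.thy i) →
    ∃ n ∈ Φ i, ∃ φ : L.Sentence, g.code φ = n ∧ φ ∈ F (g.thy i) ∧ Independent (g.thy i) φ

/-- `U` is effectively if-essentially `F`-incomplete. -/
def EffIfEssIncomplete (g : Numbering L) (U : L.Theory)
    (F : Set L.Sentence → Set L.Sentence) : Prop :=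
  ∃ Φ : ℕ →. ℕ, Partrec Φ ∧ IfEssWitness g U F Φ

/-- `U` is effectively ef-essentially `F`-incomplete: a total computable function
on (codes of) sentences produces, for each `φ` consistent with `U`, a sentence
independent of `U ∪ {φ}` lying in `F (U ∪ {φ})`. -/
def EffEfEssIncomplete (g : Numbering L) (U : L.Theory)
    (F : Set L.Sentence → Set L.Sentence) : Prop :=
  ∃ Φ : ℕ → ℕ, Computable Φ ∧ ∀ φ : L.Sentence,
    Consistent (U ∪ {φ}) →
    Independent (U ∪ {φ}) (g.equiv.symm (Φ (g.code φ))) ∧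
    g.equiv.symm (Φ (g.code φ)) ∈ F (U ∪ {φ})

/-!
If `Φ` witnesses effective ef-essential incompleteness, let `X` consist of the sentences
`φ → Φ(φ)`. Over `U ∪ {φ}` such a sentence is equivalent to `Φ(φ)`, so it is independent whenever
`U ∪ {φ}` is consistent. Moreover every member of `X` is consistent with `U`: if `U` refuted
`φ → Φ(φ)`, it would prove `φ` and `¬Φ(φ)`, although `Φ(φ)` is independent of the then consistent
theory `U ∪ {φ}`.

On the other hand, let `X` be any c.e. set of sentences each consistent with `U`, and suppose `Θ`
witnesses effective if-essential `X`-incompleteness. By the recursion theorem there is an `i` such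
that `W i` is `U` together with the value of `Θ i`, provided that it converges to a member of `X`.
Then `W i` is a consistent finite extension of `U`, so `Θ i` has to be a member of `X` independent
of `W i`; but this makes it an axiom of `W i`.
-/

section Provability

variable {U V : L.Theory} {φ ψ : L.Sentence}

theorem prv_of_mem (h : φ ∈ U) : Prv U φ :=
  Theory.models_sentence_of_mem h

theorem Prv.mono (hUV : U ⊆ V) (h : Prv U φ) : Prv V φ :=
  Theory.models_of_models_theory (fun _ hχ => prv_of_mem (hUV hχ)) h

theorem Prv.mp (himp : Prv U (φ ⟹ ψ)) (hφ : Prv U φ) : Prv U ψ :=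
  fun M v xs => himp M v xs (hφ M v xs)

theorem prv_congr (h : φ ⇔[U] ψ) : Prv U φ ↔ Prv U ψ :=
  ⟨Prv.mp h.mp, Prv.mp h.mpr⟩

theorem prv_union_singleton_iff : Prv (U ∪ {φ}) ψ ↔ Prv U (φ ⟹ ψ) := by
  refine ⟨fun h => Theory.models_sentence_iff.2 fun M => ?_, fun h =>
    (h.mono Set.subset_union_left).mp (prv_of_mem (Or.inr rfl))⟩
  rw [Sentence.realize_imp]
  intro hφ
  have : M ⊨ U ∪ {φ} :=
    Theory.model_union_iff.2 ⟨M.is_model, Theory.model_singleton_iff.2 hφ⟩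
  exact h.realize_sentence M

theorem prv_not_imp_iff : Prv U ∼(φ ⟹ ψ) ↔ Prv U φ ∧ Prv U ∼ψ := by
  simp only [Prv, Theory.models_sentence_iff, Sentence.realize_not, Sentence.realize_imp,
    Classical.not_imp, forall_and]

theorem consistent_union_singleton_iff : Consistent (U ∪ {φ}) ↔ ¬ Prv U ∼φ :=
  not_congr prv_union_singleton_iff

theorem independent_congr (h : φ ⇔[U] ψ) : Independent U φ ↔ Independent U ψ :=
  and_congr (not_congr (prv_congr h)) (not_congr (prv_congr h.not))

theorem imp_iff_of_prv (hφ : Prv U φ) : (φ ⟹ ψ) ⇔[U] ψ := fun M v xs => by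
  simp only [BoundedFormula.realize_iff, BoundedFormula.realize_imp, hφ M v xs, true_imp_iff]

theorem consistent_union_imp (hU : Consistent U)
    (h : Consistent (U ∪ {φ}) → ¬ Prv (U ∪ {φ}) ∼ψ) : Consistent (U ∪ {φ ⟹ ψ}) := by
  rw [consistent_union_singleton_iff, prv_not_imp_iff]
  rintro ⟨hφ, hψ⟩
  have hcon : Consistent (U ∪ {φ}) := fun hbot => hU ((prv_union_singleton_iff.1 hbot).mp hφ)
  exact h hcon (hψ.mono Set.subset_union_left)

end Provability

section Enumerability

variable {α β : Type*} [Primcodable α] [Primcodable β]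

theorem rePred_comp {p : β → Prop} (hp : REPred p) {f : α → β} (hf : Computable f) :
    REPred fun a => p (f a) :=
  Partrec.comp hp hf

theorem rePred_and {p q : α → Prop} (hp : REPred p) (hq : REPred q) :
    REPred fun a => p a ∧ q a :=
  (Partrec.bind hp (Partrec.comp hq Computable.fst).to₂).dom_re.of_eq fun _ => by
    simp [Part.assert]

theorem rePred_or {p q : α → Prop} (hp : REPred p) (hq : REPred q) :
    REPred fun a => p a ∨ q a := by
  obtain ⟨k, hk, hdom⟩ := Partrec.merge' hp hq
  exact hk.dom_re.of_eq fun a => (hdom a).2.trans (by simp [Part.assert])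

theorem rePred_exists {P : α → ℕ → Prop} (hP : ComputablePred fun p : α × ℕ => P p.1 p.2) :
    REPred fun a => ∃ n, P a n := by
  classical
  have hfind : Partrec fun a => Nat.rfind fun n => Part.some (decide (P a n)) :=
    Partrec.rfind hP.decide.partrec
  exact hfind.dom_re.of_eq fun a => Nat.rfind_dom.trans (by simp)

theorem computablePred_eq {f g : α → β} (hf : Computable f) (hg : Computable g) :
    ComputablePred fun a => f a = g a := by
  classical
  exact (Primrec.eq.decide.to_comp.comp hf hg).computablePred

theorem rePred_mem {f : α →. β} (hf : Partrec f) : REPred fun p : α × β => p.2 ∈ f p.1 := by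
  have heq : REPred fun q : (α × β) × β => q.2 = q.1.2 :=
    (computablePred_eq Computable.snd (Computable.snd.comp Computable.fst)).to_re
  refine (Partrec.bind (hf.comp Computable.fst) (Partrec.to₂ heq)).dom_re.of_eq fun p => ?_
  simp [Part.dom_iff_mem]

theorem exists_wSet_fixedPoint {R : ℕ → ℕ → Prop} (hR : REPred fun p : ℕ × ℕ => R p.1 p.2) :
    ∃ i, WSet i = {n | R i n} := by
  have hpart : Partrec₂ fun (c : Nat.Partrec.Code) n =>
      (Part.assert (R (Encodable.encode c) n) fun _ => Part.some ()).map fun _ => 0 :=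
    (Partrec.comp hR
      (Computable.pair (Computable.encode.comp Computable.fst) Computable.snd)).map
      (Computable.const 0).to₂
  obtain ⟨c, hc⟩ := Nat.Partrec.Code.fixed_point₂ hpart
  refine ⟨Encodable.encode c, Set.ext fun n => ?_⟩
  simp [WSet, hc, Part.assert]

theorem ce_iff_rePred {A : Set ℕ} : CE A ↔ REPred (· ∈ A) := by
  constructor
  · rintro ⟨i, rfl⟩
    exact (Nat.Partrec.Code.eval_part.comp (Computable.const _) Computable.id).dom_re
  · intro hA
    obtain ⟨i, hi⟩ := exists_wSet_fixedPoint (R := fun _ n => n ∈ A) (rePred_comp hA Computable.snd)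
    exact ⟨i, hi.symm⟩

end Enumerability

namespace Numbering

variable (g : Numbering L)

theorem mem_codes_iff {S : Set L.Sentence} {n : ℕ} : n ∈ g.codes S ↔ g.equiv.symm n ∈ S :=
  Set.mem_image_equiv

theorem mem_thy_iff {i : ℕ} {φ : L.Sentence} : φ ∈ g.thy i ↔ g.code φ ∈ WSet i := by
  simp [thy, code, Set.mem_image_equiv]

theorem ce_codes_range {f : L.Sentence → L.Sentence}
    (hf : Computable fun n => g.code (f (g.equiv.symm n))) : CE (g.codes (Set.range f)) := by
  rw [ce_iff_rePred]
  have heq : ComputablePred fun p : ℕ × ℕ => g.code (f (g.equiv.symm p.2)) = p.1 :=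
    computablePred_eq (hf.comp Computable.snd) Computable.fst
  refine (rePred_exists (P := fun n m => g.code (f (g.equiv.symm m)) = n) heq).of_eq fun n => ?_
  simp [mem_codes_iff, code, Equiv.eq_symm_apply, g.equiv.symm.exists_congr_left]

theorem exists_thy_eq_union {U : L.Theory} {X : Set L.Sentence} (hU : g.CEThy U)
    (hX : CE (g.codes X)) {Θ : ℕ →. ℕ} (hΘ : Partrec Θ) :
    ∃ i, g.thy i = U ∪ {χ ∈ X | g.code χ ∈ Θ i} := by
  let R (i n : ℕ) : Prop := n ∈ g.codes U ∨ n ∈ g.codes X ∧ n ∈ Θ i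
  have hR : REPred fun p : ℕ × ℕ => R p.1 p.2 :=
    rePred_or (rePred_comp (ce_iff_rePred.1 hU) Computable.snd) <|
      rePred_and (rePred_comp (ce_iff_rePred.1 hX) Computable.snd) <|
        rePred_mem hΘ
  obtain ⟨i, hi⟩ := exists_wSet_fixedPoint hR
  refine ⟨i, Set.ext fun χ => ?_⟩
  simp [mem_thy_iff, hi, R, mem_codes_iff, code]

/-- The sentence `φ → Φ(φ)`, where `Φ` acts on codes. It makes the claim `Φ(φ)` only under the
assumption `φ`, so that it is consistent with `U` even when `φ` is not. -/
def guarded (Φ : ℕ → ℕ) (φ : L.Sentence) : L.Sentence :=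
  φ ⟹ g.equiv.symm (Φ (g.code φ))

theorem computable_guarded {Φ : ℕ → ℕ} (hΦ : Computable Φ) :
    Computable fun n => g.code (g.guarded Φ (g.equiv.symm n)) := by
  simpa [guarded, code] using g.imp_comp.comp Computable.id hΦ

end Numbering

section Incompleteness

variable {g : Numbering L} {U : L.Theory}

theorem effEfEssIncomplete_range_guarded {Φ : ℕ → ℕ} (hΦ : Computable Φ)
    (hind : ∀ φ, Consistent (U ∪ {φ}) →
      Independent (U ∪ {φ}) (g.equiv.symm (Φ (g.code φ)))) :
    EffEfEssIncomplete g U fun _ => Set.range (g.guarded Φ) := by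
  refine ⟨_, g.computable_guarded hΦ, fun φ hφ => ?_⟩
  simp only [Numbering.code, Equiv.symm_apply_apply]
  exact ⟨(independent_congr (imp_iff_of_prv (prv_of_mem (Or.inr rfl)))).2 (hind φ hφ),
    Set.mem_range_self φ⟩

theorem not_effIfEssIncomplete_of_consistent {X : Set L.Sentence} (hU : g.CEThy U)
    (hcon : Consistent U) (hX : CE (g.codes X)) (hXU : ∀ χ ∈ X, Consistent (U ∪ {χ})) :
    ¬ EffIfEssIncomplete g U fun _ => X := by
  rintro ⟨Θ, hΘ, hwit⟩
  obtain ⟨i, hi⟩ := g.exists_thy_eq_union hU hX hΘ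
  have hsub : {χ ∈ X | g.code χ ∈ Θ i}.Subsingleton := fun χ hχ ξ hξ =>
    g.equiv.injective (Part.mem_unique hχ.2 hξ.2)
  have hthy : Consistent (g.thy i) := by
    rw [hi]
    rcases hsub.eq_empty_or_singleton with hempty | ⟨χ, hχ⟩
    · rwa [hempty, Set.union_empty]
    · rw [hχ]
      exact hXU χ (hχ.symm.subset rfl).1
  obtain ⟨_, hn, χ, rfl, hχX, hχ⟩ := hwit i ⟨hsub.finite.toFinset, by simpa using hi⟩ hthy
  exact hχ.1 (prv_of_mem (hi ▸ Or.inr ⟨hχX, hn⟩))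

end Incompleteness

/-- If `U` is a consistent, effectively ef-essentially
incomplete c.e. theory, then there is a c.e. set `X` of sentences such that `U`
is effectively ef-essentially `X`-incomplete but not effectively if-essentially
`X`-incomplete. -/
theorem statement15 {L : FirstOrder.Language} (g : Numbering L) (U : L.Theory)
    (hU : g.CEThy U) (hcon : Consistent U)
    (h : EffEfEssIncomplete g U (fun _ => (Set.univ : Set L.Sentence))) :
    ∃ X : Set L.Sentence, CE (g.codes X) ∧
      EffEfEssIncomplete g U (fun _ => X) ∧
      ¬ EffIfEssIncomplete g U (fun _ => X) := by
  obtain ⟨Φ, hΦ, hind⟩ := h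
  have hce : CE (g.codes (Set.range (g.guarded Φ))) :=
    g.ce_codes_range (g.computable_guarded hΦ)
  refine ⟨Set.range (g.guarded Φ), hce,
    effEfEssIncomplete_range_guarded hΦ fun φ hφ => (hind φ hφ).1,
    not_effIfEssIncomplete_of_consistent hU hcon hce ?_⟩
  rintro _ ⟨φ, rfl⟩
  exact consistent_union_imp hcon fun hφ => (hind φ hφ).1.2

end PourEl
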